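/- The q-deformed gl_{ℓ+1}-Whittaker function is symmetric under permutations of the spectral variables: for every permutation σ of {1,…,ℓ+1} and every p ∈ ℤ^{ℓ+1}, Ψ_{z_{σ(1)},…,z_{σ(ℓ+1)}}(p) = Ψ_{z_1,…,z_{ℓ+1}}(p). -/

import Mathlib

open Finset

/-- The `q`-factorial `(n)_q! = ∏_{m=1}^{n} (1 - q^m)` (equal to `1` for `n ≤ 0`). -/
noncomputable def qfac {K : Type*} [Field K] (q : K) (n : ℤ) : K :=
  ∏ m ∈ Finset.range n.toNat, (1 - q ^ (m + 1))

/-- A Gelfand–Zetlin pattern: a triangular array `g k i = p_{k+1,i+1}` (0-indexed),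
satisfying the interlacing conditions `p_{k+1,i} ≥ p_{k,i} ≥ p_{k+1,i+1}`. -/
def IsGZ {n : ℕ} (g : ∀ k : Fin (n + 1), Fin ((k : ℕ) + 1) → ℤ) : Prop :=
  ∀ (k : Fin n) (i : Fin ((k : ℕ) + 1)),
    g k.castSucc i ≤ g k.succ i.castSucc ∧ g k.succ i.succ ≤ g k.castSucc i

/-- The weight of a Gelfand–Zetlin pattern in the explicit formula for the
`q`-deformed `gl_{n+1}`-Whittaker function. -/
noncomputable def gzWeight {K : Type*} [Field K] (q : K) {n : ℕ} (z : Fin (n + 1) → K)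
    (g : ∀ k : Fin (n + 1), Fin ((k : ℕ) + 1) → ℤ) : K :=
  z ⟨0, n.succ_pos⟩ ^ g ⟨0, n.succ_pos⟩ ⟨0, Nat.one_pos⟩ *
  (∏ k : Fin n, z k.succ ^ ((∑ i, g k.succ i) - ∑ i, g k.castSucc i)) *
  (∏ k : Fin n, ∏ i : Fin (k : ℕ), qfac q (g k.castSucc i.castSucc - g k.castSucc i.succ)) *
  (∏ k : Fin n, ∏ i : Fin ((k : ℕ) + 1),
      (qfac q (g k.succ i.castSucc - g k.castSucc i) *
       qfac q (g k.castSucc i - g k.succ i.succ)))⁻¹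

/-- The `q`-deformed `gl_{n+1}`-Whittaker function `Ψ_z(p)`: the sum over all
Gelfand–Zetlin patterns with top row `p` of their weights, if `p` is dominant,
and `0` otherwise. -/
noncomputable def whit {K : Type*} [Field K] (q : K) (n : ℕ) (z : Fin (n + 1) → K)
    (p : Fin (n + 1) → ℤ) : K := by
  classical
  exact if (∀ k : Fin n, p k.succ ≤ p k.castSucc) then
    ∑ g ∈ (Finset.Icc (fun (k : Fin (n + 1)) (_ : Fin ((k : ℕ) + 1)) => p (Fin.last n))
        (fun (k : Fin (n + 1)) (_ : Fin ((k : ℕ) + 1)) => p ⟨0, n.succ_pos⟩)).filter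
        (fun g => IsGZ g ∧ g (Fin.last n) = p),
      gzWeight q z g
  else 0

/-- The normalized `q`-deformed Whittaker function
`Ψ̃_z(p) = (∏_{i=1}^{n} (p_i - p_{i+1})_q!) ⬝ Ψ_z(p)`. -/
noncomputable def nwhit {K : Type*} [Field K] (q : K) (n : ℕ) (z : Fin (n + 1) → K)
    (p : Fin (n + 1) → ℤ) : K :=
  (∏ i : Fin n, qfac q (p i.castSucc - p i.succ)) * whit q n z p

/-!
Write `Λ_x` for the branching operator which adds a new top row with spectral variable `x`. Then
`Ψ_z` is obtained from `1` by applying `Λ_{z₁}, …, Λ_{z_{ℓ+1}}` in turn, and its symmetry amounts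
to `Λ_y Λ_x = Λ_x Λ_y`. In the kernel of `Λ_y Λ_x` between rows `a` and `c` one sums over the
middle row `b`, whose entries are coupled through the factors `(bᵢ - bᵢ₊₁)_q!`. The `q`-Vandermonde
identity, applied to each pair `(aᵢ₊₁, cᵢ)`, rewrites this kernel as a combination, with
coefficients independent of `b`, `x` and `y`, of kernels in which the entries of `b` range
independently over a box `l ≤ b ≤ u` with `∑ lᵢ + ∑ uᵢ = ∑ aᵢ + ∑ cᵢ`. The reflection
`b ↦ l + u - b` of the box then interchanges `x` and `y`.
-/

section QFactorial

variable {K : Type*} [Field K] {q : K}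

variable (q) in
/-- The reciprocal `1 / (n)_q!`, extended by `0` to negative `n` (where `qfac` has the junk
value `1`), so that sums of products of reciprocals carry their own range of summation. -/
noncomputable def qfacInv (n : ℤ) : K :=
  if 0 ≤ n then (qfac q n)⁻¹ else 0

lemma qfacInv_of_nonneg {n : ℤ} (hn : 0 ≤ n) : qfacInv q n = (qfac q n)⁻¹ := if_pos hn

lemma qfacInv_of_neg {n : ℤ} (hn : n < 0) : qfacInv q n = 0 := if_neg hn.not_ge

lemma qfacInv_zero : qfacInv q 0 = 1 := by simp [qfacInv, qfac]

lemma qfac_add_one (n : ℕ) : qfac q (n + 1) = qfac q n * (1 - q ^ (n + 1)) :=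
  prod_range_succ _ n

lemma qfac_ne_zero (hq : ∀ n : ℕ, 1 ≤ n → q ^ n ≠ 1) (n : ℤ) : qfac q n ≠ 0 :=
  prod_ne_zero_iff.mpr fun m _ => sub_ne_zero.mpr (hq (m + 1) m.succ_pos).symm

lemma qfacInv_natCast (hq : ∀ n : ℕ, 1 ≤ n → q ^ n ≠ 1) (n : ℕ) :
    qfacInv q n = (1 - q ^ (n + 1)) * qfacInv q (n + 1) := by
  have hn : 1 - q ^ (n + 1) ≠ 0 := sub_ne_zero.mpr (hq (n + 1) n.succ_pos).symm
  rw [qfacInv_of_nonneg (by positivity), qfacInv_of_nonneg (by positivity), qfac_add_one, mul_inv,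
    mul_left_comm, mul_inv_cancel₀ hn, mul_one]

lemma pow_mul_qfacInv_sub_sub_one (hq : ∀ n : ℕ, 1 ≤ n → q ^ n ≠ 1) (n k : ℕ) :
    q ^ k * qfacInv q (n - k - 1) = (q ^ k - q ^ n) * qfacInv q (n - k) := by
  obtain hnk | rfl | hkn := lt_trichotomy n k
  · rw [qfacInv_of_neg (by lia), qfacInv_of_neg (by lia), mul_zero, mul_zero]
  · rw [qfacInv_of_neg (by lia), sub_self, mul_zero, zero_mul]
  · obtain ⟨j, rfl⟩ := Nat.exists_eq_add_of_lt hkn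
    have hj : ((k + j + 1 : ℕ) : ℤ) - k = j + 1 := by lia
    rw [hj, add_sub_cancel_right, qfacInv_natCast hq]
    ring

lemma qfacInv_natCast_sub_one (hq : ∀ n : ℕ, 1 ≤ n → q ^ n ≠ 1) (n : ℕ) :
    qfacInv q (n - 1) = (1 - q ^ n) * qfacInv q n := by
  simpa using pow_mul_qfacInv_sub_sub_one hq n 0

end QFactorial

section QVandermonde

variable {K : Type*} [Field K] {q : K}

variable (q) in
/-- The `k`-th summand of the `q`-Vandermonde sum, in the symmetric normalization
`q^{k(k+d)} / ((k)_q! (d+k)_q! (s-k)_q! (t-k)_q!)`. -/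
noncomputable def qVandermondeTerm (d s t k : ℕ) : K :=
  q ^ (k * (k + d)) * qfacInv q k * qfacInv q (d + k) * qfacInv q (s - k) * qfacInv q (t - k)

variable (q) in
/-- The Wilf–Zeilberger certificate of the recurrence for `qVandermondeTerm` in `s`. -/
noncomputable def qVandermondeCert (d s t k : ℕ) : K :=
  q ^ (k * (k + d)) * qfacInv q (k - 1) * qfacInv q (d + k) * qfacInv q (s + 1 - k) *
    qfacInv q (t - k)

lemma qVandermondeTerm_recurrence (hq : ∀ n : ℕ, 1 ≤ n → q ^ n ≠ 1) (d s t k : ℕ) :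
    (1 - q ^ (s + 1)) * qVandermondeTerm q d (s + 1) t k -
        (1 - q ^ (d + t + 1)) * qVandermondeTerm q (d + 1) s t k =
      qVandermondeCert q d s t k - qVandermondeCert q d s t (k + 1) := by
  have hk := qfacInv_natCast_sub_one hq k
  have hd := qfacInv_natCast hq (d + k)
  have hs := pow_mul_qfacInv_sub_sub_one hq (s + 1) k
  have ht := pow_mul_qfacInv_sub_sub_one hq t k
  have hs' : ((s : ℤ) + 1 - k - 1) = s - k := by ring
  have hd' : (d : ℤ) + 1 + k = d + k + 1 := by ring
  have hdk : (d : ℤ) + (k + 1) = d + k + 1 := by ring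
  simp only [qVandermondeTerm, qVandermondeCert]
  push_cast at hd hs ⊢
  rw [hs'] at hs
  rw [hd', hdk, add_sub_cancel_right, add_sub_add_right_eq_sub, ← sub_sub (t : ℤ)]
  linear_combination
    -(q ^ (k * (k + d)) * qfacInv q (d + k) * qfacInv q (s + 1 - k) * qfacInv q (t - k)) * hk -
    q ^ (k * (k + d)) * qfacInv q k * qfacInv q (d + k) * qfacInv q (t - k) * hs +
    q ^ (k * (k + d) + k) * qfacInv q k * qfacInv q (s - k) * qfacInv q (t - k) * hd +
    q ^ (k * (k + d) + k + d + 1) * qfacInv q k * qfacInv q (d + k + 1) * qfacInv q (s - k) * ht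

lemma sum_qVandermondeTerm_succ (hq : ∀ n : ℕ, 1 ≤ n → q ^ n ≠ 1) (d s t : ℕ) :
    (1 - q ^ (s + 1)) * ∑ k ∈ range (s + 2), qVandermondeTerm q d (s + 1) t k =
      (1 - q ^ (d + t + 1)) * ∑ k ∈ range (s + 1), qVandermondeTerm q (d + 1) s t k := by
  have hterm : qVandermondeTerm q (d + 1) s t (s + 1) = 0 := by
    simp [qVandermondeTerm, qfacInv_of_neg]
  have hcert_zero : qVandermondeCert q d s t 0 = 0 := by
    simp [qVandermondeCert, qfacInv_of_neg]
  have hcert_last : qVandermondeCert q d s t (s + 2) = 0 := by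
    simp [qVandermondeCert, qfacInv_of_neg]
  have htelescope := sum_range_sub' (qVandermondeCert q d s t) (s + 2)
  simp only [← qVandermondeTerm_recurrence hq, sum_sub_distrib, ← mul_sum] at htelescope
  rwa [sum_range_succ (qVandermondeTerm q (d + 1) s t), hterm, add_zero, hcert_zero, hcert_last,
    sub_zero, sub_eq_zero] at htelescope

theorem sum_qVandermondeTerm (hq : ∀ n : ℕ, 1 ≤ n → q ^ n ≠ 1) (d s t : ℕ) :
    ∑ k ∈ range (s + 1), qVandermondeTerm q d s t k =
      qfac q (d + s + t) * qfacInv q s * qfacInv q t * qfacInv q (d + s) * qfacInv q (d + t) := by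
  induction s generalizing d with
  | zero =>
    have hdt : qfac q (d + t) * qfacInv q (d + t) = 1 := by
      rw [qfacInv_of_nonneg (by positivity), mul_inv_cancel₀ (qfac_ne_zero hq _)]
    simp only [zero_add, sum_range_one, qVandermondeTerm, zero_mul, pow_zero, one_mul,
      Nat.cast_zero, sub_zero, add_zero, qfacInv_zero, mul_one]
    linear_combination -(qfacInv q d * qfacInv q t) * hdt
  | succ s ih =>
    have hs : 1 - q ^ (s + 1) ≠ 0 := sub_ne_zero.mpr (hq (s + 1) s.succ_pos).symm
    have hdt := qfacInv_natCast hq (d + t)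
    refine mul_left_cancel₀ hs ?_
    rw [sum_qVandermondeTerm_succ hq, ih, qfacInv_natCast hq s]
    push_cast at hdt ⊢
    rw [hdt, add_right_comm (d : ℤ) 1 t, add_right_comm (d : ℤ) 1 s, add_assoc (d : ℤ) s 1]
    ring

variable (q) in
/-- The coefficient `q^{(r-a)(r-c)} / ((r-a)_q! (r-c)_q!)` of the exchange relation
`qfac_exchange`. -/
noncomputable def exchangeCoeff (a c r : ℤ) : K :=
  q ^ ((r - a) * (r - c)).toNat * qfacInv q (r - a) * qfacInv q (r - c)

lemma exchangeCoeff_comm (a c r : ℤ) : exchangeCoeff q a c r = exchangeCoeff q c a r := by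
  rw [exchangeCoeff, exchangeCoeff, mul_comm (r - a), mul_right_comm]

lemma exchangeCoeff_mul_eq_qVandermondeTerm {a b b' c : ℤ} {d s t : ℕ} (hd : a - c = d)
    (hs : b - a = s) (ht : c - b' = t) (k : ℕ) :
    exchangeCoeff q a c (a + k) * (qfacInv q (b - (a + k)) * qfacInv q (a + c - (a + k) - b')) =
      qVandermondeTerm q d s t k := by
  have hk : a + k - a = k := by ring
  have hdk : a + k - c = d + k := by lia
  have hsk : b - (a + k) = s - k := by lia
  have htk : a + c - (a + k) - b' = t - k := by lia
  have hexp : ((k : ℤ) * (d + k)).toNat = k * (k + d) := by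
    rw [add_comm (d : ℤ)]
    exact Int.toNat_natCast (k * (k + d))
  rw [exchangeCoeff, hk, hdk, hsk, htk, hexp, qVandermondeTerm]
  ring

lemma qfac_exchange_of_le (hq : ∀ n : ℕ, 1 ≤ n → q ^ n ≠ 1) {a b b' c u : ℤ} (hbu : b ≤ u)
    (hca : c ≤ a) (hab : a ≤ b) (hbc : b' ≤ c) :
    qfac q (b - b') * (qfacInv q (b - a) * qfacInv q (a - b')) *
        (qfacInv q (b - c) * qfacInv q (c - b')) =
      ∑ r ∈ Icc a u,
        exchangeCoeff q a c r * (qfacInv q (b - r) * qfacInv q (a + c - r - b')) := by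
  obtain ⟨d, hd⟩ := Int.eq_ofNat_of_zero_le (sub_nonneg.mpr hca)
  obtain ⟨s, hs⟩ := Int.eq_ofNat_of_zero_le (sub_nonneg.mpr hab)
  obtain ⟨t, ht⟩ := Int.eq_ofNat_of_zero_le (sub_nonneg.mpr hbc)
  have hreindex : ∑ k ∈ range (s + 1), qVandermondeTerm q d s t k =
      ∑ r ∈ Icc a u,
        exchangeCoeff q a c r * (qfacInv q (b - r) * qfacInv q (a + c - r - b')) := by
    refine sum_of_injOn (fun k : ℕ => a + k) (fun _ _ _ _ h => by simpa using h)
      (fun k hk => ?_) (fun r hr hrange => ?_)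
      (fun k _ => (exchangeCoeff_mul_eq_qVandermondeTerm hd hs ht k).symm)
    · simp only [coe_range, Set.mem_Iio, coe_Icc, Set.mem_Icc] at hk ⊢
      lia
    · have hbr : b < r := by
        by_contra! hrb
        simp only [mem_Icc, coe_range, Set.mem_image, Set.mem_Iio] at hr hrange
        exact hrange ⟨(r - a).toNat, by lia, by lia⟩
      rw [qfacInv_of_neg (sub_neg.mpr hbr), zero_mul, mul_zero]
  have hdst : b - b' = d + s + t := by lia
  have hds : b - c = d + s := by lia
  have hdt : a - b' = d + t := by lia
  rw [← hreindex, sum_qVandermondeTerm hq, hdst, hds, hdt, hs, ht]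
  ring

lemma qfac_exchange (hq : ∀ n : ℕ, 1 ≤ n → q ^ n ≠ 1) (a c b' : ℤ) {b u : ℤ} (hbu : b ≤ u) :
    qfac q (b - b') * (qfacInv q (b - a) * qfacInv q (a - b')) *
        (qfacInv q (b - c) * qfacInv q (c - b')) =
      ∑ r ∈ Icc (a ⊔ c) u,
        exchangeCoeff q a c r * (qfacInv q (b - r) * qfacInv q (a + c - r - b')) := by
  wlog hca : c ≤ a generalizing a c
  · rw [mul_right_comm, this c a (le_of_not_ge hca), sup_comm, add_comm c a]
    simp only [exchangeCoeff_comm c a]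
  rw [sup_of_le_left hca]
  by_cases hab : a ≤ b
  · by_cases hbc : b' ≤ c
    · exact qfac_exchange_of_le hq hbu hca hab hbc
    · rw [qfacInv_of_neg (n := c - b') (by lia), mul_zero, mul_zero]
      refine (sum_eq_zero fun r hr => ?_).symm
      rw [qfacInv_of_neg (n := a + c - r - b') (by grind), mul_zero, mul_zero]
  · rw [qfacInv_of_neg (n := b - a) (by lia), zero_mul, mul_zero, zero_mul]
    refine (sum_eq_zero fun r hr => ?_).symm
    rw [qfacInv_of_neg (n := b - r) (by grind), zero_mul, mul_zero]

end QVandermonde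

section BetweenFac

variable {K : Type*} [Field K] {q : K}

section Fintype

variable {ι : Type*} [Fintype ι]

variable (q) in
/-- The factor `∏ᵢ 1 / ((uᵢ - bᵢ)_q! (bᵢ - lᵢ)_q!)`, supported on the box `l ≤ b ≤ u`. For
`l = (a₂, …, aₘ₊₁)` and `u = (a₁, …, aₘ)` it is the interlacing factor of the rows `a` and `b` of
a Gelfand–Zetlin pattern. -/
noncomputable def betweenFac (l u b : ι → ℤ) : K :=
  ∏ i, (qfacInv q (u i - b i) * qfacInv q (b i - l i))

lemma betweenFac_of_notMem_Icc [DecidableEq ι] {l u b : ι → ℤ} (hb : b ∉ Icc l u) :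
    betweenFac q l u b = 0 := by
  simp only [Pi.Icc_eq, Fintype.mem_piFinset, mem_Icc, not_forall, not_and_or, not_le] at hb
  obtain ⟨i, hlo | hhi⟩ := hb
  · exact prod_eq_zero (mem_univ i) (by rw [qfacInv_of_neg (sub_neg.mpr hlo), mul_zero])
  · exact prod_eq_zero (mem_univ i) (by rw [qfacInv_of_neg (sub_neg.mpr hhi), zero_mul])

lemma betweenFac_of_mem_Icc [DecidableEq ι] {l u b : ι → ℤ} (hb : b ∈ Icc l u) :
    betweenFac q l u b = (∏ i, (qfac q (u i - b i) * qfac q (b i - l i)))⁻¹ := by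
  obtain ⟨hlo, hhi⟩ := mem_Icc.mp hb
  rw [betweenFac, ← prod_inv_distrib]
  refine prod_congr rfl fun i _ => ?_
  rw [qfacInv_of_nonneg (sub_nonneg.mpr (hhi i)), qfacInv_of_nonneg (sub_nonneg.mpr (hlo i)),
    mul_inv]

lemma betweenFac_reflect (l u b : ι → ℤ) : betweenFac q l u (l + u - b) = betweenFac q l u b := by
  refine prod_congr rfl fun i _ => ?_
  have hu : u i - (l + u - b) i = b i - l i := by simp only [Pi.sub_apply, Pi.add_apply]; ring
  have hl : (l + u - b) i - l i = u i - b i := by simp only [Pi.sub_apply, Pi.add_apply]; ring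
  rw [hu, hl, mul_comm]

lemma sum_zpow_mul_betweenFac_comm [DecidableEq ι] {l u : ι → ℤ} {A C : ℤ}
    (hlu : ∑ i, l i + ∑ i, u i = A + C) (x y : K) :
    ∑ b ∈ Icc l u, y ^ (A - ∑ i, b i) * x ^ (∑ i, b i - C) * betweenFac q l u b =
      ∑ b ∈ Icc l u, x ^ (A - ∑ i, b i) * y ^ (∑ i, b i - C) * betweenFac q l u b := by
  refine sum_equiv (Equiv.subLeft (l + u)) (fun b => ?_) (fun b _ => ?_)
  · rw [Equiv.subLeft_apply, mem_Icc, mem_Icc, le_sub_iff_add_le, sub_le_iff_le_add,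
      add_le_add_iff_left, add_comm l u, add_le_add_iff_left, and_comm]
  · have hsum : ∑ i, (l + u - b) i = A + C - ∑ i, b i := by
      simp only [Pi.sub_apply, Pi.add_apply, sum_sub_distrib, sum_add_distrib, hlu]
    have hx : A - (A + C - ∑ i, b i) = ∑ i, b i - C := by ring
    have hy : A + C - ∑ i, b i - C = A - ∑ i, b i := by ring
    rw [Equiv.subLeft_apply, betweenFac_reflect, hsum, hx, hy, mul_comm (x ^ _)]

end Fintype

lemma betweenFac_snoc_cons {m : ℕ} (r s : Fin m → ℤ) (α ω : ℤ) (b : Fin (m + 1) → ℤ) :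
    betweenFac q (Fin.snoc r ω : Fin (m + 1) → ℤ) (Fin.cons α s : Fin (m + 1) → ℤ) b =
      qfacInv q (α - b 0) * qfacInv q (b (Fin.last m) - ω) *
        ∏ i, (qfacInv q (b i.castSucc - r i) * qfacInv q (s i - b i.succ)) := by
  rw [betweenFac, prod_mul_distrib, Fin.prod_univ_succ, Fin.prod_univ_castSucc, prod_mul_distrib]
  simp only [Fin.cons_zero, Fin.cons_succ, Fin.snoc_castSucc, Fin.snoc_last]
  ring

end BetweenFac

section Branching

variable {K : Type*} [Field K] {q : K}

variable (q) in
/-- The factor `∏ᵢ (bᵢ - bᵢ₊₁)_q!` of a row of a Gelfand–Zetlin pattern. -/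
noncomputable def rowFac : {m : ℕ} → (Fin m → ℤ) → K
  | 0, _ => 1
  | m + 1, b => ∏ i : Fin m, qfac q (b i.castSucc - b i.succ)

variable (q) in
/-- The branching operator from functions of `gl_m`-weights to functions of `gl_{m+1}`-weights:
it adds a new top row `a` to a Gelfand–Zetlin pattern with top row `b`. -/
noncomputable def branch {m : ℕ} (x : K) (f : (Fin m → ℤ) → K) (a : Fin (m + 1) → ℤ) : K :=
  ∑ b ∈ Icc (Fin.tail a) (Fin.init a),
    x ^ (∑ i, a i - ∑ i, b i) * betweenFac q (Fin.tail a) (Fin.init a) b * rowFac q b * f b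

/-- The row `(r₁, …, rₘ, aₘ₊₂)` bounding the middle row from below after its entries have been
decoupled. -/
def lowerRow {m : ℕ} (a : Fin (m + 2) → ℤ) (r : Fin m → ℤ) : Fin (m + 1) → ℤ :=
  Fin.snoc r (a (Fin.last (m + 1)))

/-- The row `(a₁, a₂ + c₁ - r₁, …, aₘ₊₁ + cₘ - rₘ)` bounding the middle row from above after its
entries have been decoupled. -/
def upperRow {m : ℕ} (a : Fin (m + 2) → ℤ) (c r : Fin m → ℤ) : Fin (m + 1) → ℤ :=
  Fin.cons (a 0) (Fin.init (Fin.tail a) + c - r)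

lemma lowerRow_init_tail {m : ℕ} (a : Fin (m + 2) → ℤ) :
    lowerRow a (Fin.init (Fin.tail a)) = Fin.tail a :=
  Fin.snoc_init_self (Fin.tail a)

lemma upperRow_self {m : ℕ} (a : Fin (m + 2) → ℤ) (c : Fin m → ℤ) :
    upperRow a c c = Fin.init a := by
  rw [upperRow, add_sub_cancel_right, ← Fin.tail_init_eq_init_tail]
  exact Fin.cons_self_tail (Fin.init a)

lemma sum_lowerRow_add_sum_upperRow {m : ℕ} (a : Fin (m + 2) → ℤ) (c r : Fin m → ℤ) :
    ∑ i, lowerRow a r i + ∑ i, upperRow a c r i = ∑ i, a i + ∑ i, c i := by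
  rw [lowerRow, upperRow, Fin.sum_snoc, Fin.sum_cons, Fin.sum_univ_succ a,
    Fin.sum_univ_castSucc fun i : Fin (m + 1) => a i.succ]
  simp only [Pi.sub_apply, Pi.add_apply, sum_sub_distrib, sum_add_distrib, Fin.init, Fin.tail,
    Fin.succ_last]
  ring

lemma Icc_lowerRow_upperRow_subset {m : ℕ} (a : Fin (m + 2) → ℤ) {c r : Fin m → ℤ}
    (hr : Fin.init (Fin.tail a) ⊔ c ≤ r) :
    Icc (lowerRow a r) (upperRow a c r) ⊆ Icc (Fin.tail a) (Fin.init a) := by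
  obtain ⟨hmid, hc⟩ := sup_le_iff.mp hr
  refine Icc_subset_Icc ?_ ?_
  · rw [← lowerRow_init_tail a]
    refine Pi.le_def.mpr (Fin.forall_fin_succ'.mpr ⟨fun i => ?_, ?_⟩)
    · simpa only [lowerRow, Fin.snoc_castSucc] using hmid i
    · simp only [lowerRow, Fin.snoc_last, le_refl]
  · rw [← upperRow_self a c]
    exact Fin.cons_le_cons.mpr ⟨le_rfl, sub_le_sub_left hc _⟩

lemma betweenFac_lowerRow_upperRow {m : ℕ} (a : Fin (m + 2) → ℤ) (c r : Fin m → ℤ)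
    (b : Fin (m + 1) → ℤ) :
    betweenFac q (lowerRow a r) (upperRow a c r) b =
      qfacInv q (a 0 - b 0) * qfacInv q (b (Fin.last m) - a (Fin.last (m + 1))) *
        ∏ i, (qfacInv q (Fin.init b i - r i) *
          qfacInv q (Fin.init (Fin.tail a) i + c i - r i - Fin.tail b i)) :=
  betweenFac_snoc_cons _ _ _ _ _

lemma betweenFac_tail_init {m : ℕ} (a : Fin (m + 2) → ℤ) (b : Fin (m + 1) → ℤ) :
    betweenFac q (Fin.tail a) (Fin.init a) b =
      qfacInv q (a 0 - b 0) * qfacInv q (b (Fin.last m) - a (Fin.last (m + 1))) *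
        betweenFac q (Fin.tail b) (Fin.init b) (Fin.init (Fin.tail a)) := by
  rw [← lowerRow_init_tail a, ← upperRow_self a (Fin.init (Fin.tail a)),
    betweenFac_lowerRow_upperRow]
  simp only [add_sub_cancel_right, lowerRow_init_tail]
  rfl

/-- The `q`-Vandermonde exchange, applied to each entry of the common neighbours of `a` and `c`,
decouples the entries of the middle row `b` from each other. -/
lemma rowFac_mul_betweenFac_mul_betweenFac (hq : ∀ n : ℕ, 1 ≤ n → q ^ n ≠ 1) {m : ℕ}
    {a : Fin (m + 2) → ℤ} {b : Fin (m + 1) → ℤ} (hb : b ≤ Fin.init a) (c : Fin m → ℤ) :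
    rowFac q b * betweenFac q (Fin.tail a) (Fin.init a) b *
        betweenFac q (Fin.tail b) (Fin.init b) c =
      ∑ r ∈ Icc (Fin.init (Fin.tail a) ⊔ c) (Fin.init (Fin.init a)),
        (∏ i, exchangeCoeff q (Fin.init (Fin.tail a) i) (c i) (r i)) *
          betweenFac q (lowerRow a r) (upperRow a c r) b := by
  have hprod := prod_congr (rfl : (univ : Finset (Fin m)) = _) fun i _ =>
    qfac_exchange hq (Fin.init (Fin.tail a) i) (c i) (b i.succ) (hb i.castSucc)
  rw [prod_univ_sum, prod_mul_distrib, prod_mul_distrib] at hprod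
  have hexchange : rowFac q b * betweenFac q (Fin.tail b) (Fin.init b) (Fin.init (Fin.tail a)) *
      betweenFac q (Fin.tail b) (Fin.init b) c = _ := hprod
  rw [betweenFac_tail_init, mul_left_comm, mul_assoc, hexchange, mul_sum]
  refine sum_congr rfl fun r _ => ?_
  rw [betweenFac_lowerRow_upperRow, prod_mul_distrib, mul_left_comm]
  rfl

lemma sum_middleRow_eq (hq : ∀ n : ℕ, 1 ≤ n → q ^ n ≠ 1) {m : ℕ} (a : Fin (m + 2) → ℤ)
    (c : Fin m → ℤ) (x y : K) :
    ∑ b ∈ Icc (Fin.tail a) (Fin.init a), y ^ (∑ i, a i - ∑ i, b i) * x ^ (∑ i, b i - ∑ i, c i) *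
        (rowFac q b * betweenFac q (Fin.tail a) (Fin.init a) b *
          betweenFac q (Fin.tail b) (Fin.init b) c) =
      ∑ r ∈ Icc (Fin.init (Fin.tail a) ⊔ c) (Fin.init (Fin.init a)),
        (∏ i, exchangeCoeff q (Fin.init (Fin.tail a) i) (c i) (r i)) *
          ∑ b ∈ Icc (lowerRow a r) (upperRow a c r),
            y ^ (∑ i, a i - ∑ i, b i) * x ^ (∑ i, b i - ∑ i, c i) *
              betweenFac q (lowerRow a r) (upperRow a c r) b := by
  have hshrink : ∀ r ∈ Icc (Fin.init (Fin.tail a) ⊔ c) (Fin.init (Fin.init a)),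
      ∑ b ∈ Icc (lowerRow a r) (upperRow a c r),
          y ^ (∑ i, a i - ∑ i, b i) * x ^ (∑ i, b i - ∑ i, c i) *
            betweenFac q (lowerRow a r) (upperRow a c r) b =
        ∑ b ∈ Icc (Fin.tail a) (Fin.init a),
          y ^ (∑ i, a i - ∑ i, b i) * x ^ (∑ i, b i - ∑ i, c i) *
            betweenFac q (lowerRow a r) (upperRow a c r) b := fun r hr =>
    sum_subset (Icc_lowerRow_upperRow_subset a (mem_Icc.mp hr).1) fun b _ hb => by
      rw [betweenFac_of_notMem_Icc hb, mul_zero]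
  rw [sum_congr rfl fun r hr => congrArg _ (hshrink r hr)]
  simp only [mul_sum]
  rw [sum_comm]
  refine sum_congr rfl fun b hb => ?_
  rw [rowFac_mul_betweenFac_mul_betweenFac hq (mem_Icc.mp hb).2, mul_sum]
  exact sum_congr rfl fun r _ => mul_left_comm _ _ _

lemma sum_middleRow_comm (hq : ∀ n : ℕ, 1 ≤ n → q ^ n ≠ 1) {m : ℕ} (a : Fin (m + 2) → ℤ)
    (c : Fin m → ℤ) (x y : K) :
    ∑ b ∈ Icc (Fin.tail a) (Fin.init a), y ^ (∑ i, a i - ∑ i, b i) * x ^ (∑ i, b i - ∑ i, c i) *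
        (rowFac q b * betweenFac q (Fin.tail a) (Fin.init a) b *
          betweenFac q (Fin.tail b) (Fin.init b) c) =
      ∑ b ∈ Icc (Fin.tail a) (Fin.init a), x ^ (∑ i, a i - ∑ i, b i) * y ^ (∑ i, b i - ∑ i, c i) *
        (rowFac q b * betweenFac q (Fin.tail a) (Fin.init a) b *
          betweenFac q (Fin.tail b) (Fin.init b) c) := by
  rw [sum_middleRow_eq hq, sum_middleRow_eq hq]
  refine sum_congr rfl fun r _ => ?_
  rw [sum_zpow_mul_betweenFac_comm (sum_lowerRow_add_sum_upperRow a c r)]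

lemma branch_branch_apply {m : ℕ} (x y : K) (f : (Fin m → ℤ) → K) (a : Fin (m + 2) → ℤ) :
    branch q y (branch q x f) a =
      ∑ c ∈ Icc (Fin.tail (Fin.tail a)) (Fin.init (Fin.init a)),
        (∑ b ∈ Icc (Fin.tail a) (Fin.init a),
          y ^ (∑ i, a i - ∑ i, b i) * x ^ (∑ i, b i - ∑ i, c i) *
            (rowFac q b * betweenFac q (Fin.tail a) (Fin.init a) b *
              betweenFac q (Fin.tail b) (Fin.init b) c)) * (rowFac q c * f c) := by
  have hextend : ∀ b ∈ Icc (Fin.tail a) (Fin.init a), branch q x f b =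
      ∑ c ∈ Icc (Fin.tail (Fin.tail a)) (Fin.init (Fin.init a)),
        x ^ (∑ i, b i - ∑ i, c i) * betweenFac q (Fin.tail b) (Fin.init b) c *
          rowFac q c * f c := fun b hb => by
    obtain ⟨hlo, hhi⟩ := mem_Icc.mp hb
    refine sum_subset (Icc_subset_Icc (fun i => hlo i.succ) fun i => hhi i.castSucc)
      fun c _ hc => ?_
    rw [betweenFac_of_notMem_Icc hc, mul_zero, zero_mul, zero_mul]
  rw [branch, sum_congr rfl fun b hb => congrArg _ (hextend b hb)]
  simp only [mul_sum, sum_mul]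
  rw [sum_comm]
  exact sum_congr rfl fun c _ => sum_congr rfl fun b _ => by ring

theorem branch_comm (hq : ∀ n : ℕ, 1 ≤ n → q ^ n ≠ 1) {m : ℕ} (x y : K) (f : (Fin m → ℤ) → K) :
    branch q y (branch q x f) = branch q x (branch q y f) := by
  funext a
  rw [branch_branch_apply, branch_branch_apply]
  exact sum_congr rfl fun c _ => by rw [sum_middleRow_comm hq]

variable (q) in
/-- The Whittaker function obtained from the constant function `1` of the empty `gl_0`-weight by
adding one row and one spectral variable at a time. -/
noncomputable def iterBranch : (n : ℕ) → (Fin n → K) → (Fin n → ℤ) → K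
  | 0, _ => fun _ => 1
  | n + 1, z => branch q (z (Fin.last n)) (iterBranch n (Fin.init z))

lemma iterBranch_succ {n : ℕ} (z : Fin (n + 1) → K) :
    iterBranch q (n + 1) z = branch q (z (Fin.last n)) (iterBranch q n (Fin.init z)) :=
  rfl

lemma iterBranch_comp_swap (hq : ∀ n : ℕ, 1 ≤ n → q ^ n ≠ 1) {n : ℕ} (i : Fin n)
    (z : Fin (n + 1) → K) :
    iterBranch q (n + 1) (z ∘ Equiv.swap i.castSucc i.succ) = iterBranch q (n + 1) z := by
  induction n with
  | zero => exact i.elim0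
  | succ n ih =>
    cases i using Fin.lastCases with
    | last =>
      have hfix : Fin.init (Fin.init (z ∘ Equiv.swap (Fin.last n).castSucc (Fin.last n).succ)) =
          Fin.init (Fin.init z) := funext fun j => congrArg z <|
        Equiv.swap_apply_of_ne_of_ne ((Fin.castSucc_injective _).ne (Fin.castSucc_lt_last j).ne)
          (Fin.castSucc_lt_last j.castSucc).ne
      have hupper : (z ∘ Equiv.swap (Fin.last n).castSucc (Fin.last n).succ) (Fin.last (n + 1)) =
          Fin.init z (Fin.last n) := congrArg z (Equiv.swap_apply_right _ _)
      have hlower : Fin.init (z ∘ Equiv.swap (Fin.last n).castSucc (Fin.last n).succ) (Fin.last n) =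
          z (Fin.last (n + 1)) := congrArg z (Equiv.swap_apply_left _ _)
      simp only [iterBranch_succ]
      rw [hfix, hupper, hlower, branch_comm hq]
    | cast i =>
      have hinit : Fin.init (z ∘ Equiv.swap i.castSucc.castSucc i.castSucc.succ) =
          Fin.init z ∘ Equiv.swap i.castSucc i.succ := funext fun j => congrArg z <|
        (Fin.castSucc_injective (n + 1)).swap_apply i.castSucc i.succ j
      have hlast : Equiv.swap i.castSucc.castSucc i.castSucc.succ (Fin.last (n + 1)) =
          Fin.last (n + 1) :=
        Equiv.swap_apply_of_ne_of_ne (Fin.castSucc_lt_last _).ne' (Fin.castSucc_lt_last i.succ).ne'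
      rw [iterBranch_succ, iterBranch_succ z, hinit, ih, Function.comp_apply, hlast]

theorem iterBranch_comp_perm (hq : ∀ n : ℕ, 1 ≤ n → q ^ n ≠ 1) {n : ℕ}
    (σ : Equiv.Perm (Fin (n + 1))) (z : Fin (n + 1) → K) :
    iterBranch q (n + 1) (z ∘ σ) = iterBranch q (n + 1) z := by
  have hσ : σ ∈ Submonoid.closure (Set.range fun i : Fin n => Equiv.swap i.castSucc i.succ) := by
    rw [Equiv.Perm.mclosure_swap_castSucc_succ]
    exact Submonoid.mem_top σ
  induction hσ using Submonoid.closure_induction generalizing z with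
  | mem _ hswap =>
    obtain ⟨i, rfl⟩ := hswap
    exact iterBranch_comp_swap hq i z
  | one => rfl
  | mul σ τ _ _ hσ hτ => exact (hτ (z ∘ σ)).trans (hσ z)

end Branching

section GelfandZetlin

/-- The triangular array obtained from `g` by adding the top row `p`. -/
def addRow {n : ℕ} (g : ∀ k : Fin (n + 1), Fin ((k : ℕ) + 1) → ℤ) (p : Fin (n + 2) → ℤ) :
    ∀ k : Fin (n + 2), Fin ((k : ℕ) + 1) → ℤ :=
  Fin.snoc (α := fun k : Fin (n + 2) => Fin ((k : ℕ) + 1) → ℤ) g p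

section AddRow

variable {n : ℕ} (g : ∀ k : Fin (n + 1), Fin ((k : ℕ) + 1) → ℤ) (p : Fin (n + 2) → ℤ)

lemma addRow_castSucc (k : Fin (n + 1)) : addRow g p k.castSucc = g k :=
  Fin.snoc_castSucc (α := fun k : Fin (n + 2) => Fin ((k : ℕ) + 1) → ℤ) p g k

lemma addRow_succ_castSucc (k : Fin n) : addRow g p k.castSucc.succ = g k.succ :=
  addRow_castSucc g p k.succ

lemma addRow_last : addRow g p (Fin.last (n + 1)) = p :=
  Fin.snoc_last (α := fun k : Fin (n + 2) => Fin ((k : ℕ) + 1) → ℤ) p g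

lemma addRow_succ_last : addRow g p (Fin.last n).succ = p :=
  addRow_last g p

lemma addRow_init_self (g : ∀ k : Fin (n + 2), Fin ((k : ℕ) + 1) → ℤ) :
    addRow (fun k => g k.castSucc) (g (Fin.last (n + 1))) = g :=
  Fin.snoc_init_self g

lemma isGZ_addRow :
    IsGZ (addRow g p) ↔ IsGZ g ∧ g (Fin.last n) ∈ Icc (Fin.tail p) (Fin.init p) := by
  rw [IsGZ, IsGZ, Fin.forall_fin_succ', mem_Icc, and_comm (a := Fin.tail p ≤ _), Pi.le_def,
    Pi.le_def]
  simp only [addRow_castSucc, addRow_succ_castSucc, addRow_succ_last, forall_and]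
  rfl

variable {K : Type*} [Field K]

lemma prod_zpow_addRow (z : Fin (n + 2) → K) :
    ∏ k : Fin (n + 1), z k.succ ^ (∑ i, addRow g p k.succ i - ∑ i, addRow g p k.castSucc i) =
      (∏ k : Fin n, Fin.init z k.succ ^ (∑ i, g k.succ i - ∑ i, g k.castSucc i)) *
        z (Fin.last (n + 1)) ^ (∑ i, p i - ∑ i, g (Fin.last n) i) := by
  rw [Fin.prod_univ_castSucc]
  simp only [addRow_castSucc, addRow_succ_castSucc, addRow_succ_last]
  rfl

lemma prod_qfac_row_addRow (q : K) :
    ∏ k : Fin (n + 1), ∏ i : Fin (k : ℕ),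
        qfac q (addRow g p k.castSucc i.castSucc - addRow g p k.castSucc i.succ) =
      (∏ k : Fin n, ∏ i : Fin (k : ℕ),
        qfac q (g k.castSucc i.castSucc - g k.castSucc i.succ)) * rowFac q (g (Fin.last n)) := by
  rw [Fin.prod_univ_castSucc]
  simp only [addRow_castSucc]
  rfl

lemma prod_qfac_between_addRow (q : K) :
    ∏ k : Fin (n + 1), ∏ i : Fin ((k : ℕ) + 1),
        (qfac q (addRow g p k.succ i.castSucc - addRow g p k.castSucc i) *
          qfac q (addRow g p k.castSucc i - addRow g p k.succ i.succ)) =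
      (∏ k : Fin n, ∏ i : Fin ((k : ℕ) + 1),
        (qfac q (g k.succ i.castSucc - g k.castSucc i) *
          qfac q (g k.castSucc i - g k.succ i.succ))) *
        ∏ i, (qfac q (Fin.init p i - g (Fin.last n) i) *
          qfac q (g (Fin.last n) i - Fin.tail p i)) := by
  rw [Fin.prod_univ_castSucc]
  simp only [addRow_castSucc, addRow_succ_castSucc, addRow_succ_last]
  rfl

variable {g p} in
lemma gzWeight_addRow (q : K) (z : Fin (n + 2) → K)
    (hg : g (Fin.last n) ∈ Icc (Fin.tail p) (Fin.init p)) :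
    gzWeight q z (addRow g p) =
      z (Fin.last (n + 1)) ^ (∑ i, p i - ∑ i, g (Fin.last n) i) *
        betweenFac q (Fin.tail p) (Fin.init p) (g (Fin.last n)) * rowFac q (g (Fin.last n)) *
        gzWeight q (Fin.init z) g := by
  have hbottom : z ⟨0, (n + 1).succ_pos⟩ ^ addRow g p ⟨0, (n + 1).succ_pos⟩ ⟨0, Nat.one_pos⟩ =
      Fin.init z ⟨0, n.succ_pos⟩ ^ g ⟨0, n.succ_pos⟩ ⟨0, Nat.one_pos⟩ :=
    congrArg (fun r : Fin 1 → ℤ => z 0 ^ r 0) (addRow_castSucc g p 0)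
  rw [gzWeight, gzWeight, hbottom, prod_zpow_addRow, prod_qfac_row_addRow,
    prod_qfac_between_addRow, mul_inv, betweenFac_of_mem_Icc hg]
  ring

end AddRow

open Classical in
/-- The Gelfand–Zetlin patterns with top row `p` and all entries in `[lo, hi]`; if `p` itself
takes values in `[lo, hi]`, these are all the patterns with top row `p`. -/
noncomputable def gzPatterns (lo hi : ℤ) {n : ℕ} (p : Fin (n + 1) → ℤ) :
    Finset (∀ k : Fin (n + 1), Fin ((k : ℕ) + 1) → ℤ) :=
  (Icc (fun _ _ => lo) (fun _ _ => hi)).filter fun g => IsGZ g ∧ g (Fin.last n) = p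

lemma mem_gzPatterns {lo hi : ℤ} {n : ℕ} {p : Fin (n + 1) → ℤ}
    {g : ∀ k : Fin (n + 1), Fin ((k : ℕ) + 1) → ℤ} :
    g ∈ gzPatterns lo hi p ↔ (∀ k i, g k i ∈ Icc lo hi) ∧ IsGZ g ∧ g (Fin.last n) = p := by
  simp only [gzPatterns, mem_filter, mem_Icc, Pi.le_def, forall_and]

lemma addRow_mem_gzPatterns {lo hi : ℤ} {n : ℕ} {p : Fin (n + 2) → ℤ}
    (hp : ∀ i, p i ∈ Icc lo hi) (g : ∀ k : Fin (n + 1), Fin ((k : ℕ) + 1) → ℤ) :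
    addRow g p ∈ gzPatterns lo hi p ↔
      g (Fin.last n) ∈ Icc (Fin.tail p) (Fin.init p) ∧
        g ∈ gzPatterns (n := n) lo hi (g (Fin.last n)) := by
  have hentries : (∀ k i, addRow g p k i ∈ Icc lo hi) ↔ ∀ k i, g k i ∈ Icc lo hi := by
    rw [Fin.forall_fin_succ', addRow_last]
    simp only [addRow_castSucc]
    exact and_iff_left hp
  rw [mem_gzPatterns, mem_gzPatterns, isGZ_addRow, hentries, addRow_last]
  tauto

lemma sum_gzPatterns_succ {M : Type*} [AddCommMonoid M] {lo hi : ℤ} {n : ℕ} {p : Fin (n + 2) → ℤ}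
    (hp : ∀ i, p i ∈ Icc lo hi) (F : (∀ k : Fin (n + 2), Fin ((k : ℕ) + 1) → ℤ) → M) :
    ∑ g ∈ gzPatterns lo hi p, F g =
      ∑ b ∈ Icc (Fin.tail p) (Fin.init p), ∑ g ∈ gzPatterns lo hi b, F (addRow g p) := by
  rw [sum_sigma']
  have hrow : ∀ {g}, g ∈ gzPatterns lo hi p → addRow (fun k => g k.castSucc) p = g := fun hg => by
    rw [← (mem_gzPatterns.mp hg).2.2, addRow_init_self]
  refine sum_bij' (fun g _ => ⟨g (Fin.last n).castSucc, fun k => g k.castSucc⟩)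
    (fun x _ => addRow x.2 p) (fun g hg => ?_) (fun x hx => ?_) (fun g hg => hrow hg)
    (fun x hx => ?_) (fun g hg => by rw [hrow hg])
  · rw [← hrow hg] at hg
    exact mem_sigma.mpr ((addRow_mem_gzPatterns hp _).mp hg)
  · obtain ⟨hb, hg⟩ := mem_sigma.mp hx
    rw [addRow_mem_gzPatterns hp, (mem_gzPatterns.mp hg).2.2]
    exact ⟨hb, hg⟩
  · obtain ⟨b, g⟩ := x
    obtain rfl : g (Fin.last n) = b := (mem_gzPatterns.mp (mem_sigma.mp hx).2).2.2
    simp only [addRow_castSucc]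

lemma sum_gzWeight_eq_iterBranch {K : Type*} [Field K] (q : K) {lo hi : ℤ} {n : ℕ}
    (z : Fin (n + 1) → K) {p : Fin (n + 1) → ℤ} (hp : ∀ i, p i ∈ Icc lo hi) :
    ∑ g ∈ gzPatterns lo hi p, gzWeight q z g = iterBranch q (n + 1) z p := by
  induction n with
  | zero =>
    have hsingle : gzPatterns lo hi p = {fun _ _ => p 0} := by
      refine eq_singleton_iff_unique_mem.mpr ⟨mem_gzPatterns.mpr ⟨fun _ _ => hp 0, ?_, ?_⟩, ?_⟩
      · exact fun k => k.elim0
      · exact funext fun i => congrArg p (Fin.fin_one_eq_zero i).symm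
      · rintro g hg
        funext k i
        obtain rfl := Fin.fin_one_eq_zero k
        obtain rfl := Fin.fin_one_eq_zero i
        exact congrFun (mem_gzPatterns.mp hg).2.2 0
    have hempty : Icc (Fin.tail p) (Fin.init p) = {Fin.tail p} := by
      rw [Subsingleton.elim (Fin.init p) (Fin.tail p), Icc_self]
    rw [hsingle, sum_singleton, iterBranch_succ, branch, hempty, sum_singleton]
    simp [gzWeight, iterBranch, rowFac, betweenFac]
  | succ n ih =>
    have hbox : ∀ b ∈ Icc (Fin.tail p) (Fin.init p), ∀ i, b i ∈ Icc lo hi := fun b hb i => by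
      obtain ⟨hlo, hhi⟩ := mem_Icc.mp hb
      exact mem_Icc.mpr ⟨(mem_Icc.mp (hp i.succ)).1.trans (hlo i),
        (hhi i).trans (mem_Icc.mp (hp i.castSucc)).2⟩
    rw [sum_gzPatterns_succ hp, iterBranch_succ, branch]
    refine sum_congr rfl fun b hb => ?_
    rw [← ih (Fin.init z) (hbox b hb), mul_sum]
    refine sum_congr rfl fun g hg => ?_
    obtain rfl := (mem_gzPatterns.mp hg).2.2
    exact gzWeight_addRow q z hb

theorem whit_eq_iterBranch {K : Type*} [Field K] (q : K) {n : ℕ} (z : Fin (n + 1) → K)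
    (p : Fin (n + 1) → ℤ) : whit q n z p = iterBranch q (n + 1) z p := by
  by_cases hp : ∀ k : Fin n, p k.succ ≤ p k.castSucc
  · have hanti : Antitone p := Fin.antitone_iff_succ_le.mpr hp
    rw [whit, if_pos hp]
    exact sum_gzWeight_eq_iterBranch q z fun i =>
      mem_Icc.mpr ⟨hanti (Fin.le_last i), hanti (Fin.zero_le i)⟩
  · have hempty : Icc (Fin.tail p) (Fin.init p) = ∅ := Icc_eq_empty hp
    rw [whit, if_neg hp, iterBranch_succ, branch, hempty, sum_empty]

end GelfandZetlin

/-- the `q`-deformed `gl_{ℓ+1}`-Whittaker function is symmetric under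
permutations of the spectral variables `z_1,…,z_{ℓ+1}`. -/
theorem whittaker_symmetric {K : Type*} [Field K] (q : K)
    (hq : ∀ n : ℕ, 1 ≤ n → q ^ n ≠ 1) (ℓ : ℕ) (hℓ : 1 ≤ ℓ)
    (z : Fin (ℓ + 1) → K) (hz : ∀ i, z i ≠ 0)
    (σ : Equiv.Perm (Fin (ℓ + 1))) (p : Fin (ℓ + 1) → ℤ) :
    whit q ℓ (fun i => z (σ i)) p = whit q ℓ z p := by
  rw [whit_eq_iterBranch, whit_eq_iterBranch]
  exact congrFun (iterBranch_comp_perm hq σ z) p
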